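/- arXiv:1706.08030 — 3 statements merged into one kernel-verified Lean document; each statement's English description precedes it below -/
import Mathlib

section
/- Let A ∈ ℝ^{m×N} satisfy the restricted isometry property of order k with constant δ, 0 ≤ δ < 1, and let n < k. Suppose A⁽⁰⁾, A⁽¹⁾, …, A⁽ⁿ⁾ is a sequence of matrices with A⁽⁰⁾ = A and A⁽ⁱ⁾ ∈ ℝ^{m×(N−i)}, such that for each i < n there is a column index jᵢ of A⁽ⁱ⁾ for which A⁽ⁱ⁺¹⁾ is obtained from A⁽ⁱ⁾ by the deflation step: letting a be the jᵢ-th column of A⁽ⁱ⁾ and P = I − a aᵀ/‖a‖₂², the columns of A⁽ⁱ⁺¹⁾ are P·c for the columns c of A⁽ⁱ⁾ other than the jᵢ-th, in their original order. Then A⁽ⁿ⁾ satisfies the restricted isometry property of order k − n with constant δ; in particular the (k−n)-th order restricted isometry constant of A⁽ⁿ⁾ is at most the k-th order restricted isometry constant of A. -/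
/-!
Let `a` be the `j`-th column of `M`, let `M'` consist of the other columns, and let `P` be the
orthogonal projection onto `aᗮ`. Deflation sends a `k`-sparse `v` to `P (M' v) = M' v - c a` with
`c = ⟨a, M' v⟩ / ‖a‖²`, which is `M w` for the `(k + 1)`-sparse vector `w` obtained from `v` by
inserting the entry `-c` at `j`. Hence `‖P (M' v)‖² ≥ (1 - δ) ‖w‖² ≥ (1 - δ) ‖v‖²` if `δ ≤ 1` (for
larger `δ` the lower bound is trivial), while `‖P (M' v)‖² ≤ ‖M' v‖² ≤ (1 + δ) ‖v‖²` because `P` is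
a contraction. One step therefore costs one unit of order and leaves `δ` unchanged.
-/

open Matrix Finset

/-- `M` satisfies the restricted isometry property of order `k` with constant `δ`. -/
def RIPc {m p : ℕ} (M : Matrix (Fin m) (Fin p) ℝ) (k : ℕ) (δ : ℝ) : Prop :=
  ∀ v : Fin p → ℝ, (Finset.univ.filter fun i => v i ≠ 0).card ≤ k →
    (1 - δ) * (∑ i, v i ^ 2) ≤ (∑ r, (M.mulVec v r) ^ 2) ∧
    (∑ r, (M.mulVec v r) ^ 2) ≤ (1 + δ) * (∑ i, v i ^ 2)

/-- The deflation step: remove the `j`-th column `a` of `M` and project the remaining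
columns (in their original order) by `P = I - a aᵀ / ‖a‖₂²`, the orthogonal projection
onto the orthogonal complement of `span {a}`. -/
noncomputable def deflate {m p : ℕ} (M : Matrix (Fin m) (Fin (p + 1)) ℝ)
    (j : Fin (p + 1)) : Matrix (Fin m) (Fin p) ℝ :=
  (((1 : Matrix (Fin m) (Fin m) ℝ) -
      Matrix.of fun r c => M r j * M c j / ∑ t, (M t j) ^ 2) * M).submatrix id j.succAbove

lemma dotProduct_self_nonneg {ι R : Type*} [Fintype ι] [Ring R] [LinearOrder R] [IsOrderedRing R]
    (v : ι → R) : 0 ≤ v ⬝ᵥ v :=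
  Finset.sum_nonneg fun i _ => mul_self_nonneg (v i)

section OrthogonalProjection

variable {ι R : Type*} [Fintype ι] [DecidableEq ι] [Field R]

/-- The matrix `I - a aᵀ / ‖a‖₂²` of the orthogonal projection onto the complement of `span {a}`,
with `‖a‖₂²` encoded as `a ⬝ᵥ a`. It is the identity if `a ⬝ᵥ a = 0`, since `0⁻¹ = 0`. -/
def projCompl (a : ι → R) : Matrix ι ι R :=
  1 - (a ⬝ᵥ a)⁻¹ • vecMulVec a a

lemma projCompl_mulVec (a u : ι → R) :
    projCompl a *ᵥ u = u - (a ⬝ᵥ u / a ⬝ᵥ a) • a := by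
  rw [projCompl, sub_mulVec, one_mulVec, smul_mulVec, vecMulVec_mulVec, op_smul_eq_smul, smul_smul,
    div_eq_inv_mul]

lemma projCompl_mulVec_dotProduct_self (a u : ι → R) :
    projCompl a *ᵥ u ⬝ᵥ projCompl a *ᵥ u = u ⬝ᵥ u - (a ⬝ᵥ u) ^ 2 / (a ⬝ᵥ a) := by
  simp only [projCompl_mulVec, sub_dotProduct, dotProduct_sub, smul_dotProduct, dotProduct_smul,
    smul_eq_mul, dotProduct_comm u a]
  rcases eq_or_ne (a ⬝ᵥ a) 0 with h | h
  · simp [h]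
  · field_simp
    ring

lemma projCompl_mulVec_dotProduct_self_le [LinearOrder R] [IsStrictOrderedRing R] (a u : ι → R) :
    projCompl a *ᵥ u ⬝ᵥ projCompl a *ᵥ u ≤ u ⬝ᵥ u := by
  rw [projCompl_mulVec_dotProduct_self]
  exact sub_le_self _ (div_nonneg (sq_nonneg _) (dotProduct_self_nonneg a))

end OrthogonalProjection

section InsertNth

variable {p : ℕ} {R : Type*}

lemma mulVec_insertNth {ι : Type*} [CommSemiring R] (M : Matrix ι (Fin (p + 1)) R)
    (j : Fin (p + 1)) (x : R) (v : Fin p → R) :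
    M *ᵥ j.insertNth x v = x • M.col j + M.submatrix id j.succAbove *ᵥ v := by
  ext r
  simp [mulVec, dotProduct, Fin.sum_univ_succAbove _ j, mul_comm]

lemma dotProduct_insertNth_self [NonUnitalNonAssocSemiring R] (j : Fin (p + 1)) (x : R)
    (v : Fin p → R) :
    (j.insertNth x v : Fin (p + 1) → R) ⬝ᵥ j.insertNth x v = x * x + v ⬝ᵥ v := by
  simp [dotProduct, Fin.sum_univ_succAbove _ j]

lemma card_filter_insertNth_ne_zero_le [Zero R] [DecidableEq R] (j : Fin (p + 1)) (x : R)
    (v : Fin p → R) :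
    #{i | (j.insertNth x v : Fin (p + 1) → R) i ≠ 0} ≤ #{i | v i ≠ 0} + 1 := by
  simp only [card_filter, Fin.sum_univ_succAbove _ j, Fin.insertNth_apply_same,
    Fin.insertNth_apply_succAbove]
  split_ifs <;> omega

end InsertNth

section RestrictedIsometry

variable {m p k : ℕ} {δ : ℝ}

lemma RIPc_iff_dotProduct {M : Matrix (Fin m) (Fin p) ℝ} :
    RIPc M k δ ↔ ∀ v : Fin p → ℝ, #{i | v i ≠ 0} ≤ k →
      (1 - δ) * (v ⬝ᵥ v) ≤ M *ᵥ v ⬝ᵥ M *ᵥ v ∧ M *ᵥ v ⬝ᵥ M *ᵥ v ≤ (1 + δ) * (v ⬝ᵥ v) := by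
  simp only [RIPc, dotProduct, sq]

lemma RIPc.reindex {m' p' : ℕ} {M : Matrix (Fin m) (Fin p) ℝ} (hM : RIPc M k δ)
    (e : Fin m ≃ Fin m') (f : Fin p ≃ Fin p') : RIPc (Matrix.reindex e f M) k δ := by
  rw [RIPc_iff_dotProduct] at hM ⊢
  intro v hv
  have hcard : #{i | (v ∘ f) i ≠ 0} = #{i | v i ≠ 0} :=
    card_equiv f fun i => by simp
  simpa only [reindex_apply, submatrix_mulVec_equiv, Equiv.symm_symm,
    comp_equiv_dotProduct_comp_equiv] using hM (v ∘ f) (hcard.trans_le hv)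

lemma RIPc.smul_col_add_bounds {M : Matrix (Fin m) (Fin (p + 1)) ℝ} (hM : RIPc M (k + 1) δ)
    (j : Fin (p + 1)) (x : ℝ) {v : Fin p → ℝ} (hv : #{i | v i ≠ 0} ≤ k) :
    let u := x • M.col j + M.submatrix id j.succAbove *ᵥ v
    (1 - δ) * (x * x + v ⬝ᵥ v) ≤ u ⬝ᵥ u ∧ u ⬝ᵥ u ≤ (1 + δ) * (x * x + v ⬝ᵥ v) := by
  simpa only [mulVec_insertNth, dotProduct_insertNth_self] using
    RIPc_iff_dotProduct.1 hM (j.insertNth x v)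
      ((card_filter_insertNth_ne_zero_le j x v).trans (Nat.succ_le_succ hv))

lemma deflate_eq_projCompl_mul (M : Matrix (Fin m) (Fin (p + 1)) ℝ) (j : Fin (p + 1)) :
    deflate M j = projCompl (M.col j) * M.submatrix id j.succAbove := by
  have hproj : (1 : Matrix (Fin m) (Fin m) ℝ) -
      Matrix.of (fun r c => M r j * M c j / ∑ t, M t j ^ 2) = projCompl (M.col j) := by
    ext r c
    simp [projCompl, vecMulVec_apply, dotProduct, sq, div_eq_inv_mul]
  rw [deflate, hproj]
  rfl

lemma RIPc.deflate {M : Matrix (Fin m) (Fin (p + 1)) ℝ} (hM : RIPc M (k + 1) δ)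
    (j : Fin (p + 1)) : RIPc (deflate M j) k δ := by
  rw [RIPc_iff_dotProduct]
  intro v hv
  rw [deflate_eq_projCompl_mul, ← mulVec_mulVec]
  set a := M.col j
  set u := M.submatrix id j.succAbove *ᵥ v
  constructor
  · set c := a ⬝ᵥ u / a ⬝ᵥ a
    have hPu : projCompl a *ᵥ u = -c • a + u := by
      rw [projCompl_mulVec, neg_smul, neg_add_eq_sub]
    rcases le_total δ 1 with hδ | hδ
    · calc (1 - δ) * (v ⬝ᵥ v) ≤ (1 - δ) * (-c * -c + v ⬝ᵥ v) :=
            mul_le_mul_of_nonneg_left (le_add_of_nonneg_left (mul_self_nonneg _))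
              (sub_nonneg.2 hδ)
        _ ≤ projCompl a *ᵥ u ⬝ᵥ projCompl a *ᵥ u := hPu ▸ (hM.smul_col_add_bounds j (-c) hv).1
    · exact (mul_nonpos_of_nonpos_of_nonneg (sub_nonpos.2 hδ) (dotProduct_self_nonneg v)).trans
        (dotProduct_self_nonneg _)
  · calc projCompl a *ᵥ u ⬝ᵥ projCompl a *ᵥ u ≤ u ⬝ᵥ u := projCompl_mulVec_dotProduct_self_le a u
      _ ≤ (1 + δ) * (v ⬝ᵥ v) := by simpa using (hM.smul_col_add_bounds j 0 hv).2

end RestrictedIsometry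

theorem stmt8_general {m k n : ℕ} {δ : ℝ} (hnk : n < k) {p : ℕ → ℕ}
    {Aseq : (i : ℕ) → Matrix (Fin m) (Fin (p i)) ℝ} (hRIP : RIPc (Aseq 0) k δ)
    (hstep : ∀ i < n, ∃ (hp : p i = p (i + 1) + 1) (j : Fin (p (i + 1) + 1)),
      Aseq (i + 1) =
        deflate (Matrix.reindex (Equiv.refl (Fin m)) (finCongr hp) (Aseq i)) j) :
    RIPc (Aseq n) (k - n) δ := by
  have hprefix : ∀ i ≤ n, RIPc (Aseq i) (k - i) δ := by
    intro i
    induction i with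
    | zero => exact fun _ => hRIP
    | succ i ih =>
      intro hi
      obtain ⟨hp, j, hj⟩ := hstep i hi
      have horder : k - i = k - (i + 1) + 1 := by omega
      rw [hj]
      exact RIPc.deflate ((horder ▸ ih (Nat.le_of_succ_le hi)).reindex _ (finCongr hp)) j
  exact hprefix n le_rfl

/-- If `A = A⁽⁰⁾, A⁽¹⁾, …, A⁽ⁿ⁾` is a sequence of matrices where each `A⁽ⁱ⁺¹⁾` is
obtained from `A⁽ⁱ⁾` by a deflation step, and `A` satisfies RIP of order `k > n` with
constant `δ`, then `A⁽ⁿ⁾` satisfies RIP of order `k - n` with the same constant `δ`. -/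
theorem stmt8 (m N k n : ℕ) (δ : ℝ) (hδ0 : 0 ≤ δ) (hδ1 : δ < 1)
    (hnk : n < k) (hnN : n ≤ N)
    (A : Matrix (Fin m) (Fin N) ℝ)
    (Aseq : (i : ℕ) → Matrix (Fin m) (Fin (N - i)) ℝ)
    (hA0 : Aseq 0 = A)
    (hRIP : RIPc A k δ)
    (hstep : ∀ i, ∀ _ : i < n, ∃ j : Fin (N - (i + 1) + 1),
      Aseq (i + 1) = deflate
        ((Matrix.reindex (Equiv.refl (Fin m))
          (finCongr (by omega : N - i = N - (i + 1) + 1))) (Aseq i)) j) :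
    RIPc (Aseq n) (k - n) δ :=
  stmt8_general hnk (hA0 ▸ hRIP) fun i hi => ⟨_, hstep i hi⟩
end

section
/- In the HTP-step setting, suppose additionally that l ∈ S* \ S. Then for every index j ∉ S ∪ S*, the j-th entry of u satisfies |u_j| ≤ (δ + ((1+δ)/γ)·r) · |x*_l|, where r = ‖x*_{S*\(S∪{l})}‖₂ / ‖x*_{S*\{l}}‖₂. -/
/-!
Let `Q` be the orthogonal projection onto the complement of `A V`, where `V` is the space of vectors
supported on `S`. The least-squares residual is `Q b`, and `Q A` kills the part of `x*` supported
on `S`, so for `j ∉ S ∪ S*`, with `v` the restriction of `x*` to `S* \ (S ∪ {l})`,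
`u_j = x*_l ⟪Q A e_j, Q A e_l⟫ + ⟪Q A e_j, A v⟫`.

The second term is at most `(1 + δ) ‖v‖` by Cauchy–Schwarz and the upper isometry bound, and the
dominance condition turns `‖v‖` into `r |x*_l| / γ`. The first term is at most `δ |x*_l|` because
`Q A` inherits the isometry constant `δ` on vectors supported off `S`: for such `z` one has
`Q A z = A (z - c)` with `c ∈ V`, whence
`(1 - δ) ‖z‖² ≤ (1 - δ) ‖z - c‖² ≤ ‖Q A z‖² ≤ ‖A z‖² ≤ (1 + δ) ‖z‖²`;
polarization then makes `Q A e_j` and `Q A e_l` nearly orthogonal.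
-/

open Matrix Finset

/-- The support of a vector, as a `Finset`. -/
noncomputable def suppF {N : ℕ} (x : Fin N → ℝ) : Finset (Fin N) :=
  Finset.univ.filter fun i => x i ≠ 0

/-- The Euclidean norm of the restriction of `v` to the index set `T`. -/
noncomputable def pnorm {N : ℕ} (T : Finset (Fin N)) (v : Fin N → ℝ) : ℝ :=
  Real.sqrt (∑ i ∈ T, v i ^ 2)

open scoped RealInnerProductSpace

section NearIsometry

variable {E F : Type*} [NormedAddCommGroup E] [InnerProductSpace ℝ E]
  [NormedAddCommGroup F] [InnerProductSpace ℝ F]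

/-- The two-sided bound of the restricted isometry property with constant `δ`, required on a
subspace `U` instead of on all sparse vectors. -/
def IsNearIsometryOn (δ : ℝ) (A : E →ₗ[ℝ] F) (U : Submodule ℝ E) : Prop :=
  ∀ v ∈ U, (1 - δ) * ‖v‖ ^ 2 ≤ ‖A v‖ ^ 2 ∧ ‖A v‖ ^ 2 ≤ (1 + δ) * ‖v‖ ^ 2

namespace IsNearIsometryOn

variable {δ : ℝ} {A : E →ₗ[ℝ] F} {U V W : Submodule ℝ E}

lemma mono (hA : IsNearIsometryOn δ A V) (hUV : U ≤ V) : IsNearIsometryOn δ A U :=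
  fun v hv => hA v (hUV hv)

lemma nonneg (hA : IsNearIsometryOn δ A U) {v : E} (hv : v ∈ U) (hv0 : v ≠ 0) : 0 ≤ δ := by
  have hpos : 0 < ‖v‖ ^ 2 := by positivity
  have hle := (hA v hv).1.trans (hA v hv).2
  linarith [le_of_mul_le_mul_right hle hpos]

lemma eq_zero_of_map_eq_zero (hA : IsNearIsometryOn δ A U) (hδ : δ < 1) {v : E} (hv : v ∈ U)
    (hAv : A v = 0) : v = 0 := by
  have hle : (1 - δ) * ‖v‖ ^ 2 ≤ 0 := by simpa [hAv] using (hA v hv).1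
  have hsq : ‖v‖ ^ 2 ≤ 0 := nonpos_of_mul_nonpos_right hle (sub_pos.2 hδ)
  simpa using hsq.antisymm (sq_nonneg _)

lemma norm_map_le (hA : IsNearIsometryOn δ A U) {v : E} (hv : v ∈ U) :
    ‖A v‖ ≤ √(1 + δ) * ‖v‖ := by
  calc ‖A v‖ ≤ √((1 + δ) * ‖v‖ ^ 2) := Real.le_sqrt_of_sq_le (hA v hv).2
    _ = √(1 + δ) * ‖v‖ := by rw [Real.sqrt_mul' _ (sq_nonneg _), Real.sqrt_sq (norm_nonneg _)]

lemma inner_map_map_le (hA : IsNearIsometryOn δ A U) {z w : E} (hz : z ∈ U) (hw : w ∈ U)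
    (hzw : ⟪z, w⟫ = 0) : ⟪A z, A w⟫ ≤ δ * (‖z‖ * ‖w‖) := by
  rcases eq_or_ne z 0 with rfl | hz0
  · simp
  rcases eq_or_ne w 0 with rfl | hw0
  · simp
  -- Polarize with `z` and `w` rescaled to the same norm `‖z‖ * ‖w‖`.
  have hz' : ‖w‖ • z ∈ U := U.smul_mem _ hz
  have hw' : ‖z‖ • w ∈ U := U.smul_mem _ hw
  have hadd := (hA _ (U.add_mem hz' hw')).2
  have hsub := (hA _ (U.sub_mem hz' hw')).1
  simp only [map_add, map_sub, map_smul, norm_add_sq_real, norm_sub_sq_real, norm_smul, norm_norm,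
    real_inner_smul_left, real_inner_smul_right, hzw] at hadd hsub
  have hpos : 0 < ‖z‖ * ‖w‖ := by positivity
  refine le_of_mul_le_mul_left ?_ hpos
  linarith

lemma abs_inner_map_map_le (hA : IsNearIsometryOn δ A U) {z w : E} (hz : z ∈ U) (hw : w ∈ U)
    (hzw : ⟪z, w⟫ = 0) : |⟪A z, A w⟫| ≤ δ * (‖z‖ * ‖w‖) := by
  refine abs_le'.2 ⟨hA.inner_map_map_le hz hw hzw, ?_⟩
  simpa using hA.inner_map_map_le (U.neg_mem hz) hw (by simpa using hzw)

section Projection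

variable [(V.map A).HasOrthogonalProjection]

lemma starProjection_orthogonal_comp (hA : IsNearIsometryOn δ A (V ⊔ W)) (hδ : δ ≤ 1)
    (hVW : V ⟂ W) :
    IsNearIsometryOn δ ((V.map A)ᗮ.starProjection.toLinearMap ∘ₗ A) W := by
  intro z hz
  obtain ⟨c, hc, hcz⟩ := Submodule.mem_map.1 ((V.map A).starProjection_apply_mem (A z))
  have hzc : A (z - c) = (V.map A)ᗮ.starProjection (A z) := by
    rw [map_sub, hcz, Submodule.starProjection_orthogonal_val]
  have hpyth : ‖z - c‖ ^ 2 = ‖z‖ ^ 2 + ‖c‖ ^ 2 := by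
    rw [norm_sub_sq_real, real_inner_comm, hVW.inner_eq hc hz]
    ring
  constructor
  · calc (1 - δ) * ‖z‖ ^ 2 ≤ (1 - δ) * ‖z - c‖ ^ 2 := by
          rw [hpyth]
          exact mul_le_mul_of_nonneg_left (le_add_of_nonneg_right (sq_nonneg _)) (sub_nonneg.2 hδ)
      _ ≤ ‖A (z - c)‖ ^ 2 :=
          (hA _ (sub_mem (Submodule.mem_sup_right hz) (Submodule.mem_sup_left hc))).1
      _ = ‖(V.map A)ᗮ.starProjection (A z)‖ ^ 2 := by rw [hzc]
  · calc ‖(V.map A)ᗮ.starProjection (A z)‖ ^ 2 ≤ ‖A z‖ ^ 2 := by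
          gcongr
          exact Submodule.norm_starProjection_apply_le _ _
      _ ≤ (1 + δ) * ‖z‖ ^ 2 := (hA z (Submodule.mem_sup_right hz)).2

lemma abs_inner_map_residual_le (hA : IsNearIsometryOn δ A (V ⊔ W)) (hδ : δ ≤ 1) (hVW : V ⟂ W)
    {e p q v : E} (he : e ∈ W) (hp : p ∈ V) (hq : q ∈ W) (heq : ⟪e, q⟫ = 0)
    (hres : A (p + q + v) ∈ (V.map A)ᗮ) :
    |⟪A e, A (p + q + v)⟫| ≤ δ * (‖e‖ * ‖q‖) + ‖A e‖ * ‖A v‖ := by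
  set Q := (V.map A)ᗮ.starProjection
  have hQp : Q (A p) = 0 :=
    Submodule.starProjection_orthogonal_apply_eq_zero (Submodule.mem_map_of_mem hp)
  have hQres : A (p + q + v) = Q (A q) + Q (A v) := by
    rw [← Submodule.starProjection_eq_self_iff.2 hres]
    simp only [map_add, Q, hQp, zero_add]
  have hQQ (y : F) : Q (Q y) = Q y :=
    Submodule.starProjection_eq_self_iff.2 (Submodule.starProjection_apply_mem _ y)
  have hsplit : ⟪A e, A (p + q + v)⟫ = ⟪Q (A e), Q (A q)⟫ + ⟪Q (A e), A v⟫ := by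
    rw [hQres, inner_add_right, Submodule.inner_starProjection_left_eq_right, hQQ,
      Submodule.inner_starProjection_left_eq_right]
  calc |⟪A e, A (p + q + v)⟫| ≤ |⟪Q (A e), Q (A q)⟫| + |⟪Q (A e), A v⟫| := by
        rw [hsplit]
        exact abs_add_le _ _
    _ ≤ δ * (‖e‖ * ‖q‖) + ‖A e‖ * ‖A v‖ := by
        gcongr
        · exact (hA.starProjection_orthogonal_comp hδ hVW).abs_inner_map_map_le he hq heq
        · refine (abs_real_inner_le_norm _ _).trans ?_
          gcongr
          exact Submodule.norm_starProjection_apply_le _ _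

end Projection

end IsNearIsometryOn

end NearIsometry

section RestrictedIsometry

variable {n : Type*}

/-- The space of vectors supported on `S`. -/
def coordSubspace (S : Finset n) : Submodule ℝ (EuclideanSpace ℝ n) where
  carrier := {v | ∀ i ∉ S, v i = 0}
  add_mem' hv hw i hi := by simp [hv i hi, hw i hi]
  zero_mem' _ _ := rfl
  smul_mem' a v hv i hi := by simp [hv i hi]

lemma coordSubspace_mono {S T : Finset n} (hST : S ⊆ T) : coordSubspace S ≤ coordSubspace T :=
  fun _ hv i hi => hv i fun hiS => hi (hST hiS)

lemma single_mem_coordSubspace [DecidableEq n] {T : Finset n} {i : n} (hi : i ∈ T) (a : ℝ) :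
    EuclideanSpace.single i a ∈ coordSubspace T := by
  intro k hk
  have hki : k ≠ i := fun h => hk (h ▸ hi)
  simp [hki]

lemma toLp_indicator_mem_coordSubspace (T : Finset n) (x : n → ℝ) :
    WithLp.toLp 2 ((T : Set n).indicator x) ∈ coordSubspace T :=
  fun _ hi => Set.indicator_of_notMem (by simpa using hi) x

lemma toLp_eq_indicator_add_single_add_indicator [DecidableEq n] {x : n → ℝ} {S T : Finset n}
    {l : n} (hx : ∀ i ∉ T, x i = 0) (hl : l ∉ S) :
    WithLp.toLp 2 x = WithLp.toLp 2 ((S : Set n).indicator x) + EuclideanSpace.single l (x l) +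
      WithLp.toLp 2 (((T \ insert l S : Finset n) : Set n).indicator x) := by
  ext i
  by_cases hil : i = l
  · subst hil
    simp [hl]
  · by_cases hiS : i ∈ S <;> by_cases hiT : i ∈ T <;> simp [hil, hiS, hiT, hx]

variable [Fintype n]

lemma coordSubspace_isOrtho {S T : Finset n} (hST : Disjoint S T) :
    coordSubspace S ⟂ coordSubspace T := by
  refine Submodule.isOrtho_iff_inner_eq.2 fun v hv w hw => ?_
  refine (PiLp.inner_apply v w).trans (Finset.sum_eq_zero fun i _ => ?_)
  by_cases hi : i ∈ S
  · simp [hw i (Finset.disjoint_left.1 hST hi)]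
  · simp [hv i hi]

lemma norm_toLp_indicator (T : Finset n) (v : n → ℝ) :
    ‖WithLp.toLp 2 ((T : Set n).indicator v)‖ = √(∑ i ∈ T, v i ^ 2) := by
  classical
  simp [EuclideanSpace.norm_eq, Set.indicator_apply, ite_pow, Finset.sum_ite_mem]

variable {F : Type*} [NormedAddCommGroup F] [InnerProductSpace ℝ F]

/-- The restricted isometry property of order `k` with constant `δ`; sparsity is expressed through
the supporting sets, so that the bounds hold on whole subspaces. -/
def RestrictedIsometry (δ : ℝ) (k : ℕ) (A : EuclideanSpace ℝ n →ₗ[ℝ] F) : Prop :=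
  ∀ T : Finset n, T.card ≤ k → IsNearIsometryOn δ A (coordSubspace T)

namespace RestrictedIsometry

variable {δ : ℝ} {k : ℕ} {A : EuclideanSpace ℝ n →ₗ[ℝ] F}

lemma nonneg [Nonempty n] (hA : RestrictedIsometry δ k A) (hk : 1 ≤ k) : 0 ≤ δ := by
  classical
  obtain ⟨i⟩ := ‹Nonempty n›
  exact (hA {i} (by simpa using hk)).nonneg
    (single_mem_coordSubspace (Finset.mem_singleton_self i) 1) (by simp)

lemma abs_inner_map_single_residual_le [DecidableEq n] (hA : RestrictedIsometry δ k A)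
    (hδ : δ ≤ 1) {S T : Finset n} (hS : S.card + 2 ≤ k) (hT : T.card ≤ k) {l j : n}
    (hlS : l ∉ S) (hjS : j ∉ S) (hjl : j ≠ l) {p v : EuclideanSpace ℝ n} (hp : p ∈ coordSubspace S)
    (hv : v ∈ coordSubspace T) (a : ℝ)
    (hres : A (p + EuclideanSpace.single l a + v) ∈ ((coordSubspace S).map A)ᗮ) :
    |⟪A (EuclideanSpace.single j 1), A (p + EuclideanSpace.single l a + v)⟫| ≤
      δ * |a| + (1 + δ) * ‖v‖ := by
  have hcard : (S ∪ {j, l}).card ≤ k :=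
    (Finset.card_union_le _ _).trans ((Nat.add_le_add_left Finset.card_le_two _).trans hS)
  have hA' : IsNearIsometryOn δ A (coordSubspace S ⊔ coordSubspace {j, l}) :=
    (hA _ hcard).mono (sup_le (coordSubspace_mono Finset.subset_union_left)
      (coordSubspace_mono Finset.subset_union_right))
  have hj := single_mem_coordSubspace (show j ∈ ({j, l} : Finset n) by simp) 1
  have hl := single_mem_coordSubspace (show l ∈ ({j, l} : Finset n) by simp) a
  have hAj : ‖A (EuclideanSpace.single j 1)‖ ≤ √(1 + δ) := by
    simpa using hA'.norm_map_le (Submodule.mem_sup_right hj)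
  have : Nonempty n := ⟨j⟩
  have hδ' : 0 ≤ 1 + δ := by linarith [hA.nonneg (by omega)]
  have hdisj : Disjoint S {j, l} := by simp [hjS, hlS]
  calc |⟪A (EuclideanSpace.single j 1), A (p + EuclideanSpace.single l a + v)⟫|
      ≤ δ * |a| + ‖A (EuclideanSpace.single j 1)‖ * ‖A v‖ := by
        simpa using hA'.abs_inner_map_residual_le hδ (coordSubspace_isOrtho hdisj) hj hp hl
          (by simp [EuclideanSpace.inner_single_left, hjl]) hres
    _ ≤ δ * |a| + √(1 + δ) * (√(1 + δ) * ‖v‖) := by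
        gcongr
        exact (hA T hT).norm_map_le hv
    _ = δ * |a| + (1 + δ) * ‖v‖ := by rw [← mul_assoc, Real.mul_self_sqrt hδ']

end RestrictedIsometry

end RestrictedIsometry

section LeastSquares

variable {m n ι : Type*} [Fintype n] [Fintype ι] [DecidableEq ι]

lemma mulVec_eq_submatrix_mulVec {R : Type*} [NonUnitalNonAssocSemiring R] (A : Matrix m n R)
    {S : Finset n} {z : n → R} (hz : ∀ i ∉ S, z i = 0) :
    A *ᵥ z = A.submatrix id ((↑) : {i // i ∈ S} → n) *ᵥ fun i => z i := by
  ext r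
  simp only [Matrix.mulVec, dotProduct, Matrix.submatrix_apply, id]
  rw [Finset.sum_coe_sort S (fun i => A r i * z i)]
  exact (Finset.sum_subset (Finset.subset_univ _) fun i _ hi => by simp [hz i hi]).symm

lemma toEuclideanLin_apply_eq_submatrix_mulVec [DecidableEq n] (A : Matrix m n ℝ)
    {S : Finset n} {z : EuclideanSpace ℝ n} (hz : z ∈ coordSubspace S) :
    A.toEuclideanLin z =
      WithLp.toLp 2 (A.submatrix id ((↑) : {i // i ∈ S} → n) *ᵥ fun i => z i) := by
  rw [← mulVec_eq_submatrix_mulVec A hz]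
  rfl

variable [Fintype m]

lemma isUnit_det_transpose_mul_self {B : Matrix m ι ℝ} (hB : Function.Injective B.mulVec) :
    IsUnit (Bᵀ * B).det := by
  rw [← Matrix.isUnit_iff_isUnit_det, ← Matrix.conjTranspose_eq_transpose_of_trivial]
  exact (Matrix.PosDef.conjTranspose_mul_self B hB).isUnit

lemma transpose_mulVec_leastSquares_residual {R : Type*} [CommRing R] (B : Matrix m ι R)
    (hB : IsUnit (Bᵀ * B).det) (b : m → R) :
    Bᵀ *ᵥ (b - B *ᵥ (((Bᵀ * B)⁻¹ * Bᵀ) *ᵥ b)) = 0 := by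
  rw [Matrix.mulVec_sub, Matrix.mulVec_mulVec, Matrix.mulVec_mulVec, ← Matrix.mul_assoc,
    Matrix.mul_nonsing_inv _ hB, Matrix.one_mul, sub_self]

variable [DecidableEq n]

lemma IsNearIsometryOn.submatrix_mulVec_injective {A : Matrix m n ℝ} {δ : ℝ} {S : Finset n}
    (hA : IsNearIsometryOn δ A.toEuclideanLin (coordSubspace S)) (hδ : δ < 1) :
    Function.Injective (A.submatrix id ((↑) : {i // i ∈ S} → n)).mulVec := by
  rw [← Matrix.coe_mulVecLin, injective_iff_map_eq_zero]
  intro c hc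
  set z : EuclideanSpace ℝ n := WithLp.toLp 2 (Function.extend (↑) c 0)
  have hzc : (fun i : {i // i ∈ S} => z i) = c :=
    funext fun i => Subtype.val_injective.extend_apply c 0 i
  have hzS : z ∈ coordSubspace S :=
    fun i hi => Function.extend_apply' _ _ _ fun ⟨k, hk⟩ => hi (hk ▸ k.2)
  have hz0 : z = 0 := hA.eq_zero_of_map_eq_zero hδ hzS <| by
    rw [toEuclideanLin_apply_eq_submatrix_mulVec A hzS, hzc]
    exact congrArg (WithLp.toLp 2) hc
  rw [← hzc, hz0]
  rfl

lemma leastSquares_residual_mem_orthogonal (A : Matrix m n ℝ) {S : Finset n}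
    (hAS : Function.Injective (A.submatrix id ((↑) : {i // i ∈ S} → n)).mulVec)
    {b : m → ℝ} {x : n → ℝ} (hx0 : ∀ i ∉ S, x i = 0)
    (hx : ∀ i : {i // i ∈ S}, x i =
      ((((A.submatrix id ((↑) : {i // i ∈ S} → n))ᵀ *
          A.submatrix id ((↑) : {i // i ∈ S} → n))⁻¹ *
        (A.submatrix id ((↑) : {i // i ∈ S} → n))ᵀ) *ᵥ b) i) :
    WithLp.toLp 2 (b - A *ᵥ x) ∈ ((coordSubspace S).map A.toEuclideanLin)ᗮ := by
  rintro - ⟨w, hw, rfl⟩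
  set B := A.submatrix id ((↑) : {i // i ∈ S} → n)
  have hnormal : Bᵀ *ᵥ (b - A *ᵥ x) = 0 := by
    rw [mulVec_eq_submatrix_mulVec A hx0, funext hx]
    exact transpose_mulVec_leastSquares_residual B (isUnit_det_transpose_mul_self hAS) b
  rw [toEuclideanLin_apply_eq_submatrix_mulVec A hw, EuclideanSpace.inner_toLp_toLp]
  simp only [star_trivial]
  rw [Matrix.dotProduct_mulVec, ← Matrix.mulVec_transpose, hnormal, zero_dotProduct]

lemma transpose_mulVec_apply_eq_inner (A : Matrix m n ℝ) (y : m → ℝ) (j : n) :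
    (Aᵀ *ᵥ y) j = ⟪A.toEuclideanLin (EuclideanSpace.single j 1), WithLp.toLp 2 y⟫ := by
  have hcol : A.toEuclideanLin (EuclideanSpace.single j 1) = WithLp.toLp 2 (A.col j) :=
    congrArg (WithLp.toLp 2) (A.mulVec_single_one j)
  rw [hcol, EuclideanSpace.inner_toLp_toLp, dotProduct_comm]
  rfl

lemma RestrictedIsometry.abs_transpose_mulVec_residual_le {A : Matrix m n ℝ} {δ : ℝ} {k : ℕ}
    (hA : RestrictedIsometry δ k A.toEuclideanLin) (hδ : δ ≤ 1) {xs x : n → ℝ} {S T : Finset n}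
    (hx : ∀ i ∉ S, x i = 0) (hxs : ∀ i ∉ T, xs i = 0) (hS : S.card + 2 ≤ k) {l j : n}
    (hT : (T \ insert l S).card ≤ k) (hlS : l ∉ S) (hjS : j ∉ S) (hjl : j ≠ l)
    (hres : WithLp.toLp 2 (A *ᵥ xs - A *ᵥ x) ∈ ((coordSubspace S).map A.toEuclideanLin)ᗮ) :
    |(Aᵀ *ᵥ (A *ᵥ xs - A *ᵥ x)) j| ≤
      δ * |xs l| + (1 + δ) * √(∑ i ∈ T \ insert l S, xs i ^ 2) := by
  set p := WithLp.toLp 2 ((S : Set n).indicator xs) - WithLp.toLp 2 x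
  set v := WithLp.toLp 2 (((T \ insert l S : Finset n) : Set n).indicator xs)
  have hp : p ∈ coordSubspace S := sub_mem (toLp_indicator_mem_coordSubspace S xs) hx
  have hv : v ∈ coordSubspace (T \ insert l S) := toLp_indicator_mem_coordSubspace _ xs
  have hsplit : p + EuclideanSpace.single l (xs l) + v = WithLp.toLp 2 xs - WithLp.toLp 2 x := by
    rw [toLp_eq_indicator_add_single_add_indicator hxs hlS]
    simp only [p, v]
    abel
  have hAsplit : A.toEuclideanLin (p + EuclideanSpace.single l (xs l) + v) =
      WithLp.toLp 2 (A *ᵥ xs - A *ᵥ x) := by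
    rw [hsplit, map_sub]
    rfl
  rw [transpose_mulVec_apply_eq_inner, ← norm_toLp_indicator, ← hAsplit]
  exact hA.abs_inner_map_single_residual_le hδ hS hT hlS hjS hjl hp hv _ (hAsplit ▸ hres)

end LeastSquares

lemma eq_zero_of_notMem_suppF {N : ℕ} {v : Fin N → ℝ} {i : Fin N} (hi : i ∉ suppF v) :
    v i = 0 := by
  simpa [suppF] using hi

lemma restrictedIsometry_of_suppF_card_le {m N k : ℕ} {A : Matrix (Fin m) (Fin N) ℝ} {δ : ℝ}
    (hRIP : ∀ v : Fin N → ℝ, (suppF v).card ≤ k →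
      (1 - δ) * (∑ i, v i ^ 2) ≤ (∑ r, (A.mulVec v r) ^ 2) ∧
      (∑ r, (A.mulVec v r) ^ 2) ≤ (1 + δ) * (∑ i, v i ^ 2)) :
    RestrictedIsometry δ k A.toEuclideanLin := by
  intro T hT v hv
  have hsupp : suppF v ⊆ T := fun i hi => by
    by_contra hiT
    exact (Finset.mem_filter.1 hi).2 (hv i hiT)
  simpa [EuclideanSpace.real_norm_sq_eq] using hRIP v ((Finset.card_le_card hsupp).trans hT)

lemma mul_le_div_mul_div_mul_of_mul_le {c γ t h a : ℝ} (hc : 0 ≤ c) (hγ : 0 < γ) (hh : 0 < h)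
    (ht : 0 ≤ t) (ha : γ * h ≤ a) : c * t ≤ c / γ * (t / h) * a := by
  calc c * t = c / γ * (t / h) * (γ * h) := by field_simp
    _ ≤ c / γ * (t / h) * a := by gcongr

theorem stmt12_general {m N k : ℕ} {A : Matrix (Fin m) (Fin N) ℝ} {δ γ : ℝ}
    (hδ : δ < 1) (hγ : 0 < γ)
    (hRIP : ∀ v : Fin N → ℝ, (suppF v).card ≤ k →
      (1 - δ) * (∑ i, v i ^ 2) ≤ (∑ r, (A.mulVec v r) ^ 2) ∧
      (∑ r, (A.mulVec v r) ^ 2) ≤ (1 + δ) * (∑ i, v i ^ 2))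
    {xs : Fin N → ℝ} {S : Finset (Fin N)} (hS : S.card + 2 ≤ k)
    {l : Fin N} (htail : (suppF xs \ insert l S).card ≤ k)
    {x : Fin N → ℝ} (hx0 : ∀ i, i ∉ S → x i = 0)
    (hxls : ∀ i : {i // i ∈ S}, x i.1 =
      ((((A.submatrix id ((↑) : {i // i ∈ S} → Fin N))ᵀ *
          A.submatrix id ((↑) : {i // i ∈ S} → Fin N))⁻¹ *
        (A.submatrix id ((↑) : {i // i ∈ S} → Fin N))ᵀ).mulVec (A.mulVec xs)) i)
    (hne : pnorm ((suppF xs).erase l) xs ≠ 0)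
    (hdom : γ * pnorm ((suppF xs).erase l) xs ≤ |xs l|)
    {u : Fin N → ℝ} (hu : ∀ j, u j = x j + Aᵀ.mulVec (A.mulVec xs - A.mulVec x) j)
    (hl : l ∈ suppF xs \ S) {j : Fin N} (hj : j ∉ S ∪ suppF xs) :
    |u j| ≤ (δ + ((1 + δ) / γ) *
      (pnorm (suppF xs \ insert l S) xs / pnorm ((suppF xs).erase l) xs)) * |xs l| := by
  obtain ⟨hlx, hlS⟩ := Finset.mem_sdiff.1 hl
  obtain ⟨hjS, hjx⟩ := Finset.notMem_union.1 hj
  have hjl : j ≠ l := fun h => hjx (h ▸ hlx)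
  have hA := restrictedIsometry_of_suppF_card_le hRIP
  have : Nonempty (Fin N) := ⟨l⟩
  have hδ' : 0 ≤ 1 + δ := by linarith [hA.nonneg (by omega)]
  have hres := leastSquares_residual_mem_orthogonal A
    ((hA S (by omega)).submatrix_mulVec_injective hδ) hx0 hxls
  calc |u j| = |(Aᵀ *ᵥ (A *ᵥ xs - A *ᵥ x)) j| := by rw [hu, hx0 j hjS, zero_add]
    _ ≤ δ * |xs l| + (1 + δ) * pnorm (suppF xs \ insert l S) xs :=
        hA.abs_transpose_mulVec_residual_le hδ.le hx0 (fun _ => eq_zero_of_notMem_suppF) hS htail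
          hlS hjS hjl hres
    _ ≤ δ * |xs l| + (1 + δ) / γ *
          (pnorm (suppF xs \ insert l S) xs / pnorm ((suppF xs).erase l) xs) * |xs l| :=
        add_le_add le_rfl (mul_le_div_mul_div_mul_of_mul_le hδ' hγ
          ((Real.sqrt_nonneg _).lt_of_ne' hne) (Real.sqrt_nonneg _) hdom)
    _ = (δ + (1 + δ) / γ *
          (pnorm (suppF xs \ insert l S) xs / pnorm ((suppF xs).erase l) xs)) * |xs l| := by
        rw [add_mul]

/-- HTP step, upper bound on `|u_j|` for `j ∉ S ∪ S*` when `l ∈ S* \ S`. -/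
theorem stmt12 (m N s : ℕ) (A : Matrix (Fin m) (Fin N) ℝ) (δ γ : ℝ)
    (hδ0 : 0 ≤ δ) (hδ1 : δ < 1) (hγ : 0 < γ)
    (hRIP : ∀ v : Fin N → ℝ, (suppF v).card ≤ s + 2 →
      (1 - δ) * (∑ i, v i ^ 2) ≤ (∑ r, (A.mulVec v r) ^ 2) ∧
      (∑ r, (A.mulVec v r) ^ 2) ≤ (1 + δ) * (∑ i, v i ^ 2))
    (xs : Fin N → ℝ) (hxs : (suppF xs).card ≤ s)
    (S : Finset (Fin N)) (hScard : S.card = s)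
    (x : Fin N → ℝ)
    (hx0 : ∀ i, i ∉ S → x i = 0)
    (hxls : ∀ i : {i // i ∈ S}, x i.1 =
      ((((A.submatrix id ((↑) : {i // i ∈ S} → Fin N))ᵀ *
          A.submatrix id ((↑) : {i // i ∈ S} → Fin N))⁻¹ *
        (A.submatrix id ((↑) : {i // i ∈ S} → Fin N))ᵀ).mulVec (A.mulVec xs)) i)
    (l : Fin N) (hl : ∀ i, |xs i| ≤ |xs l|)
    (hne : pnorm ((suppF xs).erase l) xs ≠ 0)
    (hdom : γ * pnorm ((suppF xs).erase l) xs ≤ |xs l|)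
    (u : Fin N → ℝ)
    (hu : ∀ j, u j = x j + Aᵀ.mulVec (A.mulVec xs - A.mulVec x) j)
    (hlmem : l ∈ suppF xs \ S) :
    ∀ j, j ∉ S ∪ suppF xs →
      |u j| ≤ (δ + ((1 + δ) / γ) *
        (pnorm (suppF xs \ insert l S) xs / pnorm ((suppF xs).erase l) xs)) * |xs l| :=
  fun _ => stmt12_general hδ1 hγ hRIP (by omega)
    ((Finset.card_le_card Finset.sdiff_subset).trans (by omega)) hx0 hxls hne hdom hu hlmem
end

section
/- In the HTP-step setting, for every index i ∈ S \ S*, the i-th entry of the least-squares solution x satisfies |x_i| ≤ (1/γ)·√((1+δ)/(1−δ))·r' · |x*_l|, where r' = ‖x*_{S*\S}‖₂ / ‖x*_{S*\{l}}‖₂. -/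
/-!
Let `w` be the part of `x*` off `S`, and `u` the part of `x - x*` on `S`, so that `u - w = x - x*`.
By the normal equations `A (x - x*) = A u - A w` is orthogonal to the columns of `A` indexed by `S`,
hence to `A u`: thus `A u` is an orthogonal projection of `A w`, and `‖A u‖ ≤ ‖A w‖`. The restricted
isometry property turns this into `(1 - δ) ‖u‖² ≤ (1 + δ) ‖w‖²`, which bounds each coordinate of
`x - x*` on `S` by `√((1 + δ) / (1 - δ)) ‖x*_{S* \ S}‖`. The dominance condition says that
`|x*_l| / (γ ‖x*_{S* \ {l}}‖) ≥ 1`, and multiplying the bound by this factor gives the claim.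
-/

open Matrix Finset

section LeastSquares

variable {m n R : Type*}

/-- The submatrix `A_S` of the columns of `A` indexed by `S`. -/
abbrev columnSubmatrix (A : Matrix m n R) (S : Finset n) : Matrix m {i // i ∈ S} R :=
  A.submatrix id ((↑) : {i // i ∈ S} → n)

lemma columnSubmatrix_mulVec [Fintype n] [NonUnitalNonAssocSemiring R] (A : Matrix m n R)
    (S : Finset n) (v : n → R) :
    columnSubmatrix A S *ᵥ (fun i => v i) = A *ᵥ (S : Set n).indicator v := by
  funext r
  calc ∑ i : {i // i ∈ S}, A r i * v i = ∑ i ∈ S, A r i * v i :=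
        sum_coe_sort S fun i => A r i * v i
    _ = ∑ i, A r i * (S : Set n).indicator v i :=
        (sum_indicator_subset_of_eq_zero v (fun i a => A r i * a) (subset_univ S)
          fun i => mul_zero _).symm

variable [Fintype m]

lemma sum_sq_le_sum_sq_of_dotProduct_sub_eq_zero [CommRing R] [LinearOrder R]
    [IsStrictOrderedRing R] {p q : m → R} (h : p ⬝ᵥ (p - q) = 0) :
    ∑ r, p r ^ 2 ≤ ∑ r, q r ^ 2 := by
  have hpyth : ∑ r, q r ^ 2 = ∑ r, p r ^ 2 + ∑ r, (p r - q r) ^ 2 :=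
    calc ∑ r, q r ^ 2 = ∑ r, p r ^ 2 + ∑ r, (p r - q r) ^ 2 - 2 * p ⬝ᵥ (p - q) := by
          simp only [dotProduct, Pi.sub_apply, mul_sum, ← sum_add_distrib, ← sum_sub_distrib]
          exact sum_congr rfl fun r _ => by ring
      _ = ∑ r, p r ^ 2 + ∑ r, (p r - q r) ^ 2 := by rw [h, mul_zero, sub_zero]
  rw [hpyth]
  exact le_add_of_nonneg_right (sum_nonneg fun r _ => sq_nonneg _)

variable [DecidableEq n]

lemma isUnit_transpose_mul_self [Fintype n] [Field R] [LinearOrder R] [IsStrictOrderedRing R]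
    {B : Matrix m n R} (hB : Function.Injective B.mulVec) :
    IsUnit (Bᵀ * B) := by
  rw [← mulVec_injective_iff_isUnit, ← coe_mulVecLin, ← LinearMap.ker_eq_bot,
    ker_mulVecLin_transpose_mul_self]
  exact LinearMap.ker_eq_bot.mpr hB

/-- `x` is the least-squares solution of `A x = b` supported on `S`, given by the closed formula
`x_S = (A_Sᵀ A_S)⁻¹ A_Sᵀ b`. The formula has this meaning only when `A_S` has independent columns:
Mathlib's inverse of a singular matrix is `0`. -/
structure IsLeastSquaresOn [CommRing R] (A : Matrix m n R) (b : m → R) (S : Finset n)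
    (x : n → R) : Prop where
  eq_zero : ∀ i, i ∉ S → x i = 0
  eq_mulVec : ∀ i : {i // i ∈ S}, x i =
    ((((columnSubmatrix A S)ᵀ * columnSubmatrix A S)⁻¹ * (columnSubmatrix A S)ᵀ) *ᵥ b) i

lemma IsLeastSquaresOn.indicator_eq_self [CommRing R] {A : Matrix m n R} {b : m → R}
    {S : Finset n} {x : n → R} (hx : IsLeastSquaresOn A b S x) :
    (S : Set n).indicator x = x :=
  Set.indicator_eq_self.mpr fun i hi => by_contra fun hiS => hi (hx.eq_zero i hiS)

variable [Fintype n] [Field R] [LinearOrder R] [IsStrictOrderedRing R] {A : Matrix m n R}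
  {S : Finset n} {x : n → R}

lemma IsLeastSquaresOn.normal_equations {b : m → R} (hx : IsLeastSquaresOn A b S x)
    (hS : Function.Injective (columnSubmatrix A S).mulVec) :
    (columnSubmatrix A S)ᵀ *ᵥ (A *ᵥ x) = (columnSubmatrix A S)ᵀ *ᵥ b := by
  have hdet := (isUnit_iff_isUnit_det _).mp (isUnit_transpose_mul_self hS)
  rw [← hx.indicator_eq_self, ← columnSubmatrix_mulVec, funext hx.eq_mulVec, mulVec_mulVec,
    mulVec_mulVec, ← Matrix.mul_assoc, mul_nonsing_inv _ hdet, Matrix.one_mul]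

lemma IsLeastSquaresOn.sum_sq_mulVec_indicator_le {y : n → R} (hx : IsLeastSquaresOn A (A *ᵥ y) S x)
    (hS : Function.Injective (columnSubmatrix A S).mulVec) :
    ∑ r, (A *ᵥ (S : Set n).indicator (x - y)) r ^ 2 ≤
      ∑ r, (A *ᵥ (↑(({i | y i ≠ 0} : Finset n) \ S) : Set n).indicator y) r ^ 2 := by
  set u := (S : Set n).indicator (x - y) with hu
  set w := (↑(({i | y i ≠ 0} : Finset n) \ S) : Set n).indicator y with hw
  have hsub : u - w = x - y := by
    funext i
    by_cases hiS : i ∈ S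
    · simp [hu, hw, hiS]
    · by_cases hyi : y i = 0 <;> simp [hu, hw, hiS, hyi, hx.eq_zero i hiS]
  have hresidual : (columnSubmatrix A S)ᵀ *ᵥ (A *ᵥ u - A *ᵥ w) = 0 := by
    rw [← mulVec_sub, hsub, mulVec_sub, mulVec_sub, hx.normal_equations hS, sub_self]
  apply sum_sq_le_sum_sq_of_dotProduct_sub_eq_zero
  calc A *ᵥ u ⬝ᵥ (A *ᵥ u - A *ᵥ w)
      = (columnSubmatrix A S *ᵥ fun i => (x - y) i) ⬝ᵥ (A *ᵥ u - A *ᵥ w) := by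
        rw [columnSubmatrix_mulVec]
    _ = (fun i : {i // i ∈ S} => (x - y) i) ⬝ᵥ
          ((columnSubmatrix A S)ᵀ *ᵥ (A *ᵥ u - A *ᵥ w)) := by
        rw [dotProduct_mulVec, vecMul_transpose]
    _ = 0 := by rw [hresidual, dotProduct_zero]

end LeastSquares

section RestrictedIsometry

variable {m n : Type*} [Fintype m] [Fintype n] {A : Matrix m n ℝ} {k : ℕ} {δ : ℝ}

/-- The restricted isometry property of order `k` with constant `δ`: `A` distorts the squared
Euclidean norm of every `k`-sparse vector by a factor between `1 - δ` and `1 + δ`. -/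
def HasRIP (A : Matrix m n ℝ) (k : ℕ) (δ : ℝ) : Prop :=
  ∀ v : n → ℝ, #{i | v i ≠ 0} ≤ k →
    (1 - δ) * ∑ i, v i ^ 2 ≤ ∑ r, (A *ᵥ v) r ^ 2 ∧ ∑ r, (A *ᵥ v) r ^ 2 ≤ (1 + δ) * ∑ i, v i ^ 2

lemma HasRIP.mono {j : ℕ} (hA : HasRIP A k δ) (hjk : j ≤ k) : HasRIP A j δ :=
  fun v hv => hA v (hv.trans hjk)

lemma HasRIP.sum_sq_mulVec_indicator_bounds (hA : HasRIP A k δ) {T : Finset n} (hT : #T ≤ k)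
    (v : n → ℝ) :
    (1 - δ) * ∑ i ∈ T, v i ^ 2 ≤ ∑ r, (A *ᵥ (T : Set n).indicator v) r ^ 2 ∧
      ∑ r, (A *ᵥ (T : Set n).indicator v) r ^ 2 ≤ (1 + δ) * ∑ i ∈ T, v i ^ 2 := by
  have hsparse : #{i | (T : Set n).indicator v i ≠ 0} ≤ k :=
    (card_le_card fun i hi => Set.mem_of_indicator_ne_zero (mem_filter.mp hi).2).trans hT
  have hsum : ∑ i, (T : Set n).indicator v i ^ 2 = ∑ i ∈ T, v i ^ 2 :=
    sum_indicator_subset_of_eq_zero v (fun _ a => a ^ 2) (subset_univ T)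
      fun _ => zero_pow two_ne_zero
  simpa only [hsum] using hA _ hsparse

lemma HasRIP.injective_columnSubmatrix_mulVec (hA : HasRIP A k δ) (hδ : δ < 1) {S : Finset n}
    (hS : #S ≤ k) : Function.Injective (columnSubmatrix A S).mulVec := by
  refine (injective_iff_map_eq_zero (columnSubmatrix A S).mulVecLin).mpr fun v hv => ?_
  obtain ⟨z, rfl⟩ : ∃ z : n → ℝ, (fun i : {i // i ∈ S} => z i) = v :=
    ⟨Function.extend (↑) v 0, funext fun i => Subtype.val_injective.extend_apply v 0 i⟩
  have hAz : A *ᵥ (S : Set n).indicator z = 0 := by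
    rw [← columnSubmatrix_mulVec]
    exact hv
  have hsum : ∑ i ∈ S, z i ^ 2 ≤ 0 := by
    have hlower := (hA.sum_sq_mulVec_indicator_bounds hS z).1
    simp only [hAz, Pi.zero_apply, zero_pow two_ne_zero, sum_const_zero] at hlower
    exact nonpos_of_mul_nonpos_right hlower (sub_pos.mpr hδ)
  funext i
  exact pow_eq_zero_iff two_ne_zero |>.mp <|
    (sum_eq_zero_iff_of_nonneg fun j _ => sq_nonneg (z j)).mp
      (hsum.antisymm (sum_nonneg fun j _ => sq_nonneg (z j))) i i.2

theorem HasRIP.sum_sq_sub_le [DecidableEq n] {S : Finset n} {x y : n → ℝ} (hA : HasRIP A k δ)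
    (hδ : δ < 1) (hS : #S ≤ k) (hy : #(({i | y i ≠ 0} : Finset n) \ S) ≤ k)
    (hx : IsLeastSquaresOn A (A *ᵥ y) S x) :
    ∑ i ∈ S, (x i - y i) ^ 2 ≤
      (1 + δ) / (1 - δ) * ∑ i ∈ ({i | y i ≠ 0} : Finset n) \ S, y i ^ 2 := by
  rw [div_mul_eq_mul_div, le_div_iff₀' (sub_pos.mpr hδ)]
  calc (1 - δ) * ∑ i ∈ S, (x i - y i) ^ 2
      ≤ ∑ r, (A *ᵥ (S : Set n).indicator (x - y)) r ^ 2 :=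
        (hA.sum_sq_mulVec_indicator_bounds hS (x - y)).1
    _ ≤ ∑ r, (A *ᵥ (↑(({i | y i ≠ 0} : Finset n) \ S) : Set n).indicator y) r ^ 2 :=
        hx.sum_sq_mulVec_indicator_le (hA.injective_columnSubmatrix_mulVec hδ hS)
    _ ≤ (1 + δ) * ∑ i ∈ ({i | y i ≠ 0} : Finset n) \ S, y i ^ 2 :=
        (hA.sum_sq_mulVec_indicator_bounds hy y).2

end RestrictedIsometry

section HTP

variable {m N k : ℕ} {A : Matrix (Fin m) (Fin N) ℝ} {δ γ : ℝ} {S : Finset (Fin N)}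
  {x xs : Fin N → ℝ}

theorem HasRIP.abs_sub_le (hA : HasRIP A k δ) (hδ : δ < 1) (hS : #S ≤ k)
    (hxs : #(suppF xs \ S) ≤ k) (hx : IsLeastSquaresOn A (A *ᵥ xs) S x) {i : Fin N}
    (hi : i ∈ S) :
    |x i - xs i| ≤ √((1 + δ) / (1 - δ)) * pnorm (suppF xs \ S) xs := by
  rw [pnorm, ← Real.sqrt_mul' _ (sum_nonneg fun j _ => sq_nonneg (xs j))]
  refine Real.abs_le_sqrt (le_trans ?_ (hA.sum_sq_sub_le hδ hS hxs hx))
  exact single_le_sum (f := fun j => (x j - xs j) ^ 2) (fun j _ => sq_nonneg _) hi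

theorem stmt15_general (hA : HasRIP A k δ) (hδ : δ < 1) (hγ : 0 < γ) (hS : #S ≤ k)
    (hxs : #(suppF xs \ S) ≤ k) (hx : IsLeastSquaresOn A (A *ᵥ xs) S x) {l : Fin N}
    (hne : pnorm ((suppF xs).erase l) xs ≠ 0)
    (hdom : γ * pnorm ((suppF xs).erase l) xs ≤ |xs l|) {i : Fin N} (hi : i ∈ S) :
    |x i - xs i| ≤ (1 / γ) * √((1 + δ) / (1 - δ)) *
      (pnorm (suppF xs \ S) xs / pnorm ((suppF xs).erase l) xs) * |xs l| := by
  have hpos : 0 < pnorm ((suppF xs).erase l) xs := (Real.sqrt_nonneg _).lt_of_ne' hne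
  have hratio : 1 ≤ |xs l| / (γ * pnorm ((suppF xs).erase l) xs) :=
    (one_le_div₀ (mul_pos hγ hpos)).mpr hdom
  calc |x i - xs i| ≤ √((1 + δ) / (1 - δ)) * pnorm (suppF xs \ S) xs :=
        hA.abs_sub_le hδ hS hxs hx hi
    _ ≤ √((1 + δ) / (1 - δ)) * pnorm (suppF xs \ S) xs *
          (|xs l| / (γ * pnorm ((suppF xs).erase l) xs)) :=
        le_mul_of_one_le_right (mul_nonneg (Real.sqrt_nonneg _) (Real.sqrt_nonneg _)) hratio
    _ = _ := by field_simp

end HTP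

/-- HTP step, upper bound on `|x_i|` for `i ∈ S \ S*`. -/
theorem stmt15 (m N s : ℕ) (A : Matrix (Fin m) (Fin N) ℝ) (δ γ : ℝ)
    (hδ0 : 0 ≤ δ) (hδ1 : δ < 1) (hγ : 0 < γ)
    (hRIP : ∀ v : Fin N → ℝ, (suppF v).card ≤ s + 2 →
      (1 - δ) * (∑ i, v i ^ 2) ≤ (∑ r, (A.mulVec v r) ^ 2) ∧
      (∑ r, (A.mulVec v r) ^ 2) ≤ (1 + δ) * (∑ i, v i ^ 2))
    (xs : Fin N → ℝ) (hxs : (suppF xs).card ≤ s)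
    (S : Finset (Fin N)) (hScard : S.card = s)
    (x : Fin N → ℝ)
    (hx0 : ∀ i, i ∉ S → x i = 0)
    (hxls : ∀ i : {i // i ∈ S}, x i.1 =
      ((((A.submatrix id ((↑) : {i // i ∈ S} → Fin N))ᵀ *
          A.submatrix id ((↑) : {i // i ∈ S} → Fin N))⁻¹ *
        (A.submatrix id ((↑) : {i // i ∈ S} → Fin N))ᵀ).mulVec (A.mulVec xs)) i)
    (l : Fin N) (hl : ∀ i, |xs i| ≤ |xs l|)
    (hne : pnorm ((suppF xs).erase l) xs ≠ 0)
    (hdom : γ * pnorm ((suppF xs).erase l) xs ≤ |xs l|) :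
    ∀ i ∈ S \ suppF xs,
      |x i| ≤ (1 / γ) * Real.sqrt ((1 + δ) / (1 - δ)) *
        (pnorm (suppF xs \ S) xs / pnorm ((suppF xs).erase l) xs) * |xs l| := by
  intro i hi
  obtain ⟨hiS, hisupp⟩ := mem_sdiff.mp hi
  have hxsi : xs i = 0 := by simpa [suppF] using hisupp
  simpa only [hxsi, sub_zero] using
    stmt15_general (HasRIP.mono hRIP (Nat.le_add_right s 2)) hδ1 hγ hScard.le
      ((card_le_card sdiff_subset).trans hxs) ⟨hx0, hxls⟩ hne hdom hiS
end
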